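/- Let x ≥ 3.5 be a half-integer (x = m + 1/2 for some positive integer m) and let C = 1284699552/444215525. Then ∑_{p prime, x/2 < p < 3x/2} 1/|x − p| ≤ 2C + 4·log(log x). -/

import Mathlib

/-- Möbius as a real function -/
noncomputable def mob (n : ℕ) : ℝ := ((ArithmeticFunction.moebius n : ℤ) : ℝ)

/-- Selberg terms -/
noncomputable def selH (n : ℕ) : ℝ := mob n ^ 2 / (Nat.totient n : ℝ)

noncomputable def selG (Q : ℕ) : ℝ := ∑ n ∈ Finset.Icc 1 Q, selH n

noncomputable def selY (Q f : ℕ) : ℝ := mob f / ((Nat.totient f : ℝ) * selG Q)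

noncomputable def selL (Q d : ℕ) : ℝ :=
  d * ∑ f ∈ Finset.Icc 1 Q with d ∣ f, mob (f / d) * selY Q f

lemma selH_nonneg (n : ℕ) : 0 ≤ selH n := by unfold selH; positivity

lemma mob_sq (n : ℕ) : mob n ^ 2 = if Squarefree n then 1 else 0 := by
  unfold mob
  have := ArithmeticFunction.moebius_sq (n := n)
  exact_mod_cast congrArg (fun z : ℤ => (z : ℝ)) this

lemma abs_mob_le (n : ℕ) : |mob n| ≤ 1 := by
  unfold mob
  exact_mod_cast ArithmeticFunction.abs_moebius_le_one (n := n)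

lemma selG_pos {Q : ℕ} (hQ : 1 ≤ Q) : 0 < selG Q := by
  have h1 : selH 1 = 1 := by simp [selH, mob]
  have : selH 1 ≤ selG Q :=
    Finset.single_le_sum (f := selH) (fun i _ => selH_nonneg i) (by simp [hQ])
  linarith

lemma sum_mob_between (f g : ℕ) (hf : 1 ≤ f) (Q : ℕ) (hg : g ∈ Finset.Icc 1 Q) :
    ∑ d ∈ Finset.Icc 1 Q, (if f ∣ d ∧ d ∣ g then mob (g / d) else 0) = if g = f then 1 else 0 := by
  rw [Finset.mem_Icc] at hg
  by_cases hfg : f ∣ g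
  · obtain ⟨k, rfl⟩ := hfg
    have hk : k ≠ 0 := by rintro rfl; simp at hg
    rw [← Finset.sum_filter]
    have e : ∑ d ∈ Finset.Icc 1 Q with f ∣ d ∧ d ∣ f * k, mob (f * k / d)
        = ∑ d ∈ k.divisors, mob (k / d) := by
      symm
      apply Finset.sum_bij (fun d _ => f * d)
      · intro d hd
        rw [Nat.mem_divisors] at hd
        have h1 : 0 < d := Nat.pos_of_dvd_of_pos hd.1 (Nat.pos_of_ne_zero hk)
        have h2 : f * d ∣ f * k := Nat.mul_dvd_mul_left f hd.1
        simp only [Finset.mem_filter, Finset.mem_Icc, dvd_mul_right, h2, and_self, and_true]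
        exact ⟨Nat.mul_pos hf h1, (Nat.le_of_dvd (by omega) h2).trans hg.2⟩
      · intro a _ b _ h
        exact Nat.eq_of_mul_eq_mul_left hf h
      · intro b hb
        simp only [Finset.mem_filter] at hb
        obtain ⟨_, ⟨c, rfl⟩, hc⟩ := hb
        exact ⟨c, by simp [hk, Nat.dvd_of_mul_dvd_mul_left hf hc], rfl⟩
      · intro a _
        rw [Nat.mul_div_mul_left _ _ hf]
    rw [e, Nat.sum_div_divisors k mob]
    have h := congrArg (fun F : ArithmeticFunction ℤ => F k) ArithmeticFunction.moebius_mul_coe_zeta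
    simp only [ArithmeticFunction.coe_mul_zeta_apply, ArithmeticFunction.one_apply] at h
    have h' := congrArg (fun z : ℤ => (z : ℝ)) h
    simp only [Int.cast_sum] at h'
    have e2 : (f * k = f) ↔ k = 1 := by
      constructor
      · intro h; exact Nat.eq_of_mul_eq_mul_left hf (by omega)
      · rintro rfl; simp
    simp only [e2, mob]
    refine Eq.trans h' ?_
    split_ifs <;> simp
  · rw [Finset.sum_eq_zero]
    · rw [if_neg]; rintro rfl; exact hfg dvd_rfl
    · intro d _
      rw [if_neg]
      rintro ⟨h1, h2⟩
      exact hfg (h1.trans h2)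

lemma selL_sum {Q f : ℕ} (hf : f ∈ Finset.Icc 1 Q) :
    ∑ d ∈ Finset.Icc 1 Q, (if f ∣ d then selL Q d / d else 0) = selY Q f := by
  have h1 : ∀ d ∈ Finset.Icc 1 Q, (if f ∣ d then selL Q d / d else 0) =
      ∑ g ∈ Finset.Icc 1 Q, selY Q g * (if f ∣ d ∧ d ∣ g then mob (g / d) else 0) := by
    intro d hd
    have hd0 : (d : ℝ) ≠ 0 := by
      have := (Finset.mem_Icc.1 hd).1
      positivity
    split_ifs with h
    · rw [selL, mul_div_cancel_left₀ _ hd0, Finset.sum_filter]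
      apply Finset.sum_congr rfl
      intro g _
      by_cases hg : d ∣ g <;> simp [h, hg, mul_comm]
    · simp [h]
  rw [Finset.sum_congr rfl h1, Finset.sum_comm]
  have h2 : ∀ g ∈ Finset.Icc 1 Q, ∑ d ∈ Finset.Icc 1 Q,
      selY Q g * (if f ∣ d ∧ d ∣ g then mob (g / d) else 0) = if g = f then selY Q g else 0 := by
    intro g hg
    rw [← Finset.mul_sum, sum_mob_between f g (Finset.mem_Icc.1 hf).1 Q hg]
    simp
  rw [Finset.sum_congr rfl h2, Finset.sum_ite_eq' , if_pos hf]

lemma selL_form {Q : ℕ} (hQ : 1 ≤ Q) :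
    ∑ d ∈ Finset.Icc 1 Q, ∑ e ∈ Finset.Icc 1 Q, selL Q d * selL Q e / (Nat.lcm d e : ℝ)
      = 1 / selG Q := by
  have hG := selG_pos hQ
  have h1 : ∀ d ∈ Finset.Icc 1 Q, ∀ e ∈ Finset.Icc 1 Q,
      selL Q d * selL Q e / (Nat.lcm d e : ℝ) = ∑ f ∈ Finset.Icc 1 Q,
        (Nat.totient f : ℝ) * ((if f ∣ d then selL Q d / d else 0) *
          (if f ∣ e then selL Q e / e else 0)) := by
    intro d hd e he
    have hd0 := (Finset.mem_Icc.1 hd).1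
    have he0 := (Finset.mem_Icc.1 he).1
    have hdR : (d : ℝ) ≠ 0 := by positivity
    have heR : (e : ℝ) ≠ 0 := by positivity
    have hg : 0 < Nat.gcd d e := Nat.gcd_pos_of_pos_left _ hd0
    have hl : (Nat.lcm d e : ℝ) ≠ 0 := by
      have := Nat.lcm_pos hd0 he0
      positivity
    have hgl : (Nat.gcd d e : ℝ) * (Nat.lcm d e : ℝ) = d * e := by
      exact_mod_cast Nat.gcd_mul_lcm d e
    have hs : (Nat.gcd d e : ℝ) = ∑ f ∈ Finset.Icc 1 Q,
        if f ∣ d ∧ f ∣ e then (Nat.totient f : ℝ) else 0 := by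
      rw [← Finset.sum_filter]
      conv_lhs => rw [← Nat.sum_totient (Nat.gcd d e)]
      rw [Nat.cast_sum]
      apply Finset.sum_congr _ (fun _ _ => rfl)
      ext f
      simp only [Nat.mem_divisors, Finset.mem_filter, Finset.mem_Icc, Nat.dvd_gcd_iff]
      constructor
      · rintro ⟨h, _⟩
        exact ⟨⟨Nat.pos_of_dvd_of_pos h.1 hd0,
          (Nat.le_of_dvd hd0 h.1).trans (Finset.mem_Icc.1 hd).2⟩, h⟩
      · rintro ⟨_, h⟩
        exact ⟨h, hg.ne'⟩
    have e1 : selL Q d * selL Q e / (Nat.lcm d e : ℝ)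
        = (Nat.gcd d e : ℝ) * (selL Q d / d * (selL Q e / e)) := by
      field_simp
      linear_combination (-selL Q d * selL Q e) * hgl
    rw [e1, hs, Finset.sum_mul]
    apply Finset.sum_congr rfl
    intro f _
    by_cases a : f ∣ d <;> by_cases b : f ∣ e <;> simp [a, b]
  have h2 : ∑ d ∈ Finset.Icc 1 Q, ∑ e ∈ Finset.Icc 1 Q, selL Q d * selL Q e / (Nat.lcm d e : ℝ)
      = ∑ f ∈ Finset.Icc 1 Q, (Nat.totient f : ℝ) * selY Q f ^ 2 := by
    rw [Finset.sum_congr rfl (fun d hd => Finset.sum_congr rfl (h1 d hd))]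
    rw [Finset.sum_congr rfl (fun d hd => Finset.sum_comm), Finset.sum_comm]
    apply Finset.sum_congr rfl
    intro f hf
    rw [← selL_sum hf, sq, Finset.sum_mul_sum, Finset.mul_sum]
    apply Finset.sum_congr rfl
    intro d _
    rw [Finset.mul_sum]
  rw [h2]
  have h3 : ∀ f ∈ Finset.Icc 1 Q, (Nat.totient f : ℝ) * selY Q f ^ 2 = selH f * (1 / selG Q ^ 2) := by
    intro f hf
    have : (Nat.totient f : ℝ) ≠ 0 := by
      have := Nat.totient_pos.2 (Finset.mem_Icc.1 hf).1
      positivity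
    rw [selY, selH]
    field_simp
  rw [Finset.sum_congr rfl h3, ← Finset.sum_mul]
  change selG Q * _ = _
  field_simp

lemma selL_one {Q : ℕ} (hQ : 1 ≤ Q) : selL Q 1 = 1 := by
  have hG := selG_pos hQ
  unfold selL
  have : ∀ f ∈ Finset.Icc 1 Q, mob (f / 1) * selY Q f = selH f * (1 / selG Q) := by
    intro f hf
    rw [Nat.div_one, selY, selH]
    field_simp
  simp only [one_dvd, Finset.filter_true, Nat.cast_one, one_mul]
  rw [Finset.sum_congr rfl this, ← Finset.sum_mul]
  change selG Q * _ = _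
  field_simp

lemma selH_of_sq {n : ℕ} (h : Squarefree n) : selH n = 1 / (Nat.totient n : ℝ) := by
  rw [selH, mob_sq, if_pos h]

lemma selH_mul_le (Q d : ℕ) (hd : 1 ≤ d) :
    (d : ℝ) * ∑ f ∈ Finset.Icc 1 Q with d ∣ f, selH f ≤ selG Q := by
  have h0 : ∑ f ∈ Finset.Icc 1 Q with d ∣ f, selH f =
      ∑ f ∈ Finset.Icc 1 Q with (d ∣ f ∧ Squarefree f), selH f := by
    rw [← Finset.filter_filter]
    symm
    apply Finset.sum_filter_of_ne
    intro f _ hf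
    by_contra hs
    exact hf (by rw [selH, mob_sq, if_neg hs, zero_div])
  rw [h0, Finset.mul_sum]
  set S := Finset.filter (fun f => d ∣ f ∧ Squarefree f) (Finset.Icc 1 Q) with hS
  have h1 : ∀ f ∈ S, (d : ℝ) * selH f = ∑ l ∈ d.divisors, selH (f / l) := by
    intro f hf
    simp only [hS, Finset.mem_filter, Finset.mem_Icc] at hf
    obtain ⟨⟨hf1, _⟩, hdf, hsq⟩ := hf
    have : (d : ℝ) = ∑ l ∈ d.divisors, (Nat.totient l : ℝ) := by
      exact_mod_cast (Nat.sum_totient d).symm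
    rw [this, Finset.sum_mul]
    apply Finset.sum_congr rfl
    intro l hl
    have hlf := (Nat.dvd_of_mem_divisors hl).trans hdf
    obtain ⟨k, rfl⟩ := hlf
    have hl0 : 0 < l := Nat.pos_of_mem_divisors hl
    have hk0 : 0 < k := by
      rcases Nat.eq_zero_or_pos k with rfl | h
      · simp at hf1
      · exact h
    have hcop := Nat.coprime_of_squarefree_mul hsq
    rw [Nat.mul_div_cancel_left _ hl0, selH_of_sq hsq, selH_of_sq (hsq.squarefree_of_dvd (dvd_mul_left k l)),
      Nat.totient_mul hcop]
    have := Nat.totient_pos.2 hl0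
    have := Nat.totient_pos.2 hk0
    push_cast
    field_simp
  rw [Finset.sum_congr rfl h1, ← Finset.sum_product']
  have hinj : Set.InjOn (fun q : ℕ × ℕ => q.1 / q.2) (S ×ˢ d.divisors : Finset (ℕ × ℕ)) := by
    rintro ⟨f, l⟩ h ⟨f', l'⟩ h' heq
    simp only [hS, Finset.coe_product, Set.mem_prod, Finset.mem_coe, Finset.mem_filter, Finset.mem_Icc] at h h'
    obtain ⟨⟨⟨hf1, _⟩, hdf, hsq⟩, hl⟩ := h
    obtain ⟨⟨⟨hf1', _⟩, hdf', hsq'⟩, hl'⟩ := h'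
    have key : ∀ f l : ℕ, d ∣ f → Squarefree f → l ∈ d.divisors → l * Nat.gcd (f / l) d = d := by
      intro f l hdf hsq hl
      obtain ⟨c, rfl⟩ := hdf
      obtain ⟨e, rfl⟩ := Nat.dvd_of_mem_divisors hl
      have hl0 : 0 < l := Nat.pos_of_mem_divisors hl
      rw [mul_assoc, Nat.mul_div_cancel_left _ hl0]
      have : Nat.Coprime c l := by
        apply Nat.coprime_of_squarefree_mul
        exact hsq.squarefree_of_dvd ⟨e, by ring⟩
      have h2 : Nat.gcd (e * c) (l * e) = e := by
        rw [mul_comm l e, Nat.gcd_mul_left, this.gcd_eq_one, mul_one]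
      rw [h2]
    have k1 := key f l hdf hsq hl
    have k2 := key f' l' hdf' hsq' hl'
    simp only at heq
    rw [← heq] at k2
    have hg : 0 < Nat.gcd (f / l) d := Nat.gcd_pos_of_pos_right _ hd
    have hll : l = l' := Nat.eq_of_mul_eq_mul_right hg (k1.trans k2.symm)
    subst hll
    have e1 := Nat.div_mul_cancel ((Nat.dvd_of_mem_divisors hl).trans hdf)
    have e2 := Nat.div_mul_cancel ((Nat.dvd_of_mem_divisors hl).trans hdf')
    rw [heq] at e1
    rw [Prod.mk.injEq]
    exact ⟨e1.symm.trans e2, rfl⟩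
  rw [← Finset.sum_image (f := selH) hinj]
  apply Finset.sum_le_sum_of_subset_of_nonneg
  · intro g hg
    simp only [Finset.mem_image, Finset.mem_product, hS, Finset.mem_filter, Finset.mem_Icc] at hg
    obtain ⟨⟨f, l⟩, ⟨⟨⟨hf1, hf2⟩, hdf, hsq⟩, hl⟩, rfl⟩ := hg
    have hlf := (Nat.dvd_of_mem_divisors hl).trans hdf
    rw [Finset.mem_Icc]
    exact ⟨Nat.div_pos (Nat.le_of_dvd hf1 hlf) (Nat.pos_of_mem_divisors hl),
      (Nat.div_le_self _ _).trans hf2⟩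
  · intro i _ _; exact selH_nonneg i

lemma abs_selL_le {Q d : ℕ} (hQ : 1 ≤ Q) (hd : 1 ≤ d) : |selL Q d| ≤ 1 := by
  have hG := selG_pos hQ
  unfold selL
  rw [abs_mul, Nat.abs_cast]
  have h1 : |∑ f ∈ Finset.Icc 1 Q with d ∣ f, mob (f / d) * selY Q f| ≤
      (∑ f ∈ Finset.Icc 1 Q with d ∣ f, selH f) / selG Q := by
    refine (Finset.abs_sum_le_sum_abs _ _).trans ?_
    rw [Finset.sum_div]
    apply Finset.sum_le_sum
    intro f hf
    have hm : |mob f| ≤ mob f ^ 2 := by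
      by_cases hs : Squarefree f
      · rw [mob_sq, if_pos hs]; exact abs_mob_le f
      · have : mob f ^ 2 = 0 := by rw [mob_sq, if_neg hs]
        have : mob f = 0 := by simpa using this
        simp [this]
    rw [abs_mul, selY, abs_div, abs_of_nonneg (by positivity : 0 ≤ (Nat.totient f : ℝ) * selG Q), selH,
      div_div]
    calc _ ≤ 1 * (|mob f| / ((Nat.totient f : ℝ) * selG Q)) := by
          gcongr; exact abs_mob_le _
      _ ≤ _ := by rw [one_mul]; gcongr
  calc _ ≤ (d : ℝ) * ((∑ f ∈ Finset.Icc 1 Q with d ∣ f, selH f) / selG Q) := by gcongr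
    _ ≤ 1 := by
      rw [← mul_div_assoc, div_le_one hG]
      exact selH_mul_le Q d hd

lemma count_dvd (a N l : ℕ) (hl : 1 ≤ l) :
    |((Finset.filter (fun n => l ∣ n) (Finset.Ioc a (a + N))).card : ℝ) - N / l| ≤ 1 := by
  have h : (Finset.filter (fun n => l ∣ n) (Finset.Ioc a (a + N))).card + a / l = (a + N) / l := by
    rw [← Nat.Ioc_filter_dvd_card_eq_div, ← Nat.Ioc_filter_dvd_card_eq_div, ← Finset.card_union_of_disjoint]
    · congr 1
      ext n
      simp only [Finset.mem_union, Finset.mem_filter, Finset.mem_Ioc]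
      constructor
      · rintro (h | h) <;> exact ⟨by omega, h.2⟩
      · rintro ⟨h, h2⟩
        by_cases n ≤ a
        · right; exact ⟨by omega, h2⟩
        · left; exact ⟨by omega, h2⟩
    · rw [Finset.disjoint_left]
      intro n h1 h2
      simp only [Finset.mem_filter, Finset.mem_Ioc] at h1 h2
      omega
  have hl' : (0 : ℝ) < l := by positivity
  have h1 : (a : ℝ) = l * ((a / l : ℕ) : ℝ) + ((a % l : ℕ) : ℝ) := by
    exact_mod_cast (Nat.div_add_mod a l).symm
  have h2 : (a : ℝ) + N = l * (((a + N) / l : ℕ) : ℝ) + (((a + N) % l : ℕ) : ℝ) := by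
    exact_mod_cast (Nat.div_add_mod (a + N) l).symm
  have h3 : ((a % l : ℕ) : ℝ) ≤ l := by exact_mod_cast (Nat.mod_lt a hl).le
  have h4 : (((a + N) % l : ℕ) : ℝ) ≤ l := by exact_mod_cast (Nat.mod_lt _ hl).le
  have h5 : (0 : ℝ) ≤ ((a % l : ℕ) : ℝ) := by positivity
  have h6 : (0 : ℝ) ≤ (((a + N) % l : ℕ) : ℝ) := by positivity
  have h' : ((Finset.filter (fun n => l ∣ n) (Finset.Ioc a (a + N))).card : ℝ)
      = (((a + N) / l : ℕ) : ℝ) - ((a / l : ℕ) : ℝ) := by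
    rw [eq_sub_iff_add_eq]; exact_mod_cast h
  rw [h', abs_le]
  constructor
  · rw [neg_le_sub_iff_le_add, div_le_iff₀ hl']; nlinarith
  · rw [sub_le_iff_le_add, ← sub_le_iff_le_add', le_div_iff₀ hl']; nlinarith

theorem selberg_bound (Q a N : ℕ) (hQ : 1 ≤ Q) :
    ((Finset.filter (fun n => n.Prime ∧ Q < n) (Finset.Ioc a (a + N))).card : ℝ)
      ≤ N / selG Q + (Q : ℝ) ^ 2 := by
  set I := Finset.Ioc a (a + N) with hI
  set D := Finset.Icc 1 Q with hD
  have h1 : ((Finset.filter (fun n => n.Prime ∧ Q < n) I).card : ℝ)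
      ≤ ∑ n ∈ I, (∑ d ∈ D, if d ∣ n then selL Q d else 0) ^ 2 := by
    rw [Finset.card_eq_sum_ones, Nat.cast_sum, Finset.sum_filter]
    apply Finset.sum_le_sum
    intro n _
    split_ifs with h
    · have : ∑ d ∈ D, (if d ∣ n then selL Q d else 0) = 1 := by
        rw [Finset.sum_eq_single 1]
        · simp [selL_one hQ]
        · intro d hd hd1
          rw [if_neg]
          intro hdn
          rcases (Nat.dvd_prime h.1).1 hdn with h2 | h2
          · exact hd1 h2
          · have := (Finset.mem_Icc.1 hd).2
            omega
        · intro h2; exact absurd (Finset.mem_Icc.2 ⟨le_rfl, hQ⟩) h2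
      rw [this]; norm_num
    · positivity
  have h2 : ∑ n ∈ I, (∑ d ∈ D, if d ∣ n then selL Q d else 0) ^ 2 =
      ∑ d ∈ D, ∑ e ∈ D, selL Q d * selL Q e *
        ((Finset.filter (fun n => Nat.lcm d e ∣ n) I).card : ℝ) := by
    have : ∀ n ∈ I, (∑ d ∈ D, if d ∣ n then selL Q d else 0) ^ 2 =
        ∑ d ∈ D, ∑ e ∈ D, selL Q d * selL Q e * (if Nat.lcm d e ∣ n then 1 else 0) := by
      intro n _
      rw [sq, Finset.sum_mul_sum]
      apply Finset.sum_congr rfl; intro d _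
      apply Finset.sum_congr rfl; intro e _
      by_cases x : d ∣ n <;> by_cases y : e ∣ n <;> simp [x, y, Nat.lcm_dvd_iff]
    rw [Finset.sum_congr rfl this, Finset.sum_comm]
    apply Finset.sum_congr rfl; intro d _
    rw [Finset.sum_comm]
    apply Finset.sum_congr rfl; intro e _
    rw [← Finset.mul_sum, Finset.card_eq_sum_ones, Nat.cast_sum, Finset.sum_filter]
    simp
  have h3 : ∑ d ∈ D, ∑ e ∈ D, selL Q d * selL Q e *
        ((Finset.filter (fun n => Nat.lcm d e ∣ n) I).card : ℝ) ≤
      ∑ d ∈ D, ∑ e ∈ D, (N * (selL Q d * selL Q e / (Nat.lcm d e : ℝ)) + 1) := by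
    apply Finset.sum_le_sum; intro d hd
    apply Finset.sum_le_sum; intro e he
    have hd0 := (Finset.mem_Icc.1 hd).1
    have he0 := (Finset.mem_Icc.1 he).1
    have hc := count_dvd a N (Nat.lcm d e) (Nat.lcm_pos hd0 he0)
    rw [← hI] at hc
    set c := ((Finset.filter (fun n => Nat.lcm d e ∣ n) I).card : ℝ)
    have k1 : |selL Q d * selL Q e * (c - N / (Nat.lcm d e : ℝ))| ≤ 1 := by
      rw [abs_mul, abs_mul]
      have a1 := abs_selL_le hQ hd0
      have a2 := abs_selL_le hQ he0
      exact mul_le_one₀ (mul_le_one₀ a1 (abs_nonneg _) a2) (abs_nonneg _) hc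
    have k2 := (abs_le.1 k1).2
    have k3 : selL Q d * selL Q e * (c - N / (Nat.lcm d e : ℝ)) = selL Q d * selL Q e * c -
      N * (selL Q d * selL Q e / (Nat.lcm d e : ℝ)) := by ring
    linarith
  refine h1.trans (h2.le.trans (h3.trans (le_of_eq ?_)))
  simp only [Finset.sum_add_distrib, ← Finset.mul_sum]
  rw [hD, selL_form hQ]
  simp
  ring

lemma sum_inv_factored (r : ℕ) (hr : 1 ≤ r) (F : Finset ℕ)
    (hF : ∀ k ∈ F, k ∈ Nat.factoredNumbers r.primeFactors) :
    ∑ k ∈ F, (1 : ℝ) / k ≤ r / (Nat.totient r : ℝ) := by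
  let f : ℕ →* ℝ :=
    { toFun := fun n => (1 : ℝ) / n
      map_one' := by simp
      map_mul' := by intro a b; push_cast; rw [one_div_mul_one_div] }
  have h := (EulerProduct.summable_and_hasSum_factoredNumbers_prod_filter_prime_geometric (f := f) (by
    intro p hp
    have : (1 : ℝ) < p := by exact_mod_cast hp.one_lt
    change ‖(1 : ℝ) / p‖ < 1
    rw [Real.norm_of_nonneg (by positivity), div_lt_one (by positivity)]
    exact this) r.primeFactors).2
  have e : ∏ p ∈ r.primeFactors with p.Prime, (1 - f p)⁻¹ = r / (Nat.totient r : ℝ) := by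
    have h1 : Finset.filter (fun p => p.Prime) r.primeFactors = r.primeFactors :=
      Finset.filter_true_of_mem (fun p hp => Nat.prime_of_mem_primeFactors hp)
    have h2 : (Nat.totient r : ℝ) = r * ∏ p ∈ r.primeFactors, (1 - (p : ℝ)⁻¹) := by
      have := congrArg (fun z : ℚ => (z : ℝ)) (Nat.totient_eq_mul_prod_factors r)
      push_cast at this
      exact this
    have hr' : (r : ℝ) ≠ 0 := by positivity
    rw [h1, h2, Finset.prod_inv_distrib, div_mul_eq_div_div, div_self hr', one_div]
    simp [f]
  rw [e] at h
  have h3 := (hasSum_subtype_iff_indicator (f := fun m : ℕ => f m)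
    (s := Nat.factoredNumbers r.primeFactors)).1 h
  have h4 := sum_le_hasSum F (by
    intro i _
    apply Set.indicator_nonneg
    intro j _
    change 0 ≤ (1 : ℝ) / j
    positivity) h3
  refine le_trans (le_of_eq ?_) h4
  apply Finset.sum_congr rfl
  intro k hk
  rw [Set.indicator_of_mem (hF k hk)]
  rfl

lemma log_le_selG (Q : ℕ) : Real.log ((Q : ℝ) + 1) ≤ selG Q := by
  have h1 := log_add_one_le_harmonic Q
  push_cast at h1
  have h2 : ((harmonic Q : ℚ) : ℝ) = ∑ n ∈ Finset.Icc 1 Q, (1 : ℝ) / n := by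
    rw [harmonic_eq_sum_Icc]; push_cast; simp
  have h3 : ∑ n ∈ Finset.Icc 1 Q, (1 : ℝ) / n ≤ selG Q := by
    let rad : ℕ → ℕ := fun n => ∏ p ∈ n.primeFactors, p
    have hrad0 : ∀ n, 0 < rad n := fun n => Finset.prod_pos
      (fun p hp => (Nat.prime_of_mem_primeFactors hp).pos)
    have hradd : ∀ n, rad n ∣ n := fun n => Nat.prod_primeFactors_dvd n
    have hmaps : ∀ n ∈ Finset.Icc 1 Q, rad n ∈ Finset.Icc 1 Q := by
      intro n hn
      rw [Finset.mem_Icc] at hn ⊢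
      exact ⟨hrad0 n, (Nat.le_of_dvd hn.1 (hradd n)).trans hn.2⟩
    rw [← Finset.sum_fiberwise_of_maps_to hmaps]
    apply Finset.sum_le_sum
    intro r hr
    by_cases hex : ∃ n, rad n = r
    · obtain ⟨n0, hn0⟩ := hex
      have hsq : Squarefree r := by
        rw [← hn0]
        apply Finset.squarefree_prod_of_pairwise_isCoprime
        · intro p hp q hq hpq
          simp only [Function.onFun]
          rw [← Nat.coprime_iff_isRelPrime]
          exact (Nat.coprime_primes (Nat.prime_of_mem_primeFactors hp)
            (Nat.prime_of_mem_primeFactors hq)).2 hpq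
        · intro p hp
          exact (Nat.prime_of_mem_primeFactors hp).prime.squarefree
      have hr1 : 1 ≤ r := (Finset.mem_Icc.1 hr).1
      rw [selH_of_sq hsq]
      set F := Finset.filter (fun n => rad n = r) (Finset.Icc 1 Q)
      have hdiv : ∀ n ∈ F, r ∣ n := by
        intro n hn
        have := (Finset.mem_filter.1 hn).2
        rw [← this]; exact hradd n
      have hinj : Set.InjOn (fun n => n / r) (F : Set ℕ) := by
        intro a ha b hb hab
        have e1 := Nat.div_mul_cancel (hdiv a ha)
        have e2 := Nat.div_mul_cancel (hdiv b hb)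
        simp only at hab
        rw [hab] at e1
        exact e1.symm.trans e2
      have e1 : ∑ n ∈ F, (1 : ℝ) / n = (1 / r) * ∑ k ∈ F.image (fun n => n / r), (1 : ℝ) / k := by
        rw [Finset.sum_image hinj, Finset.mul_sum]
        apply Finset.sum_congr rfl
        intro n hn
        have := Nat.div_mul_cancel (hdiv n hn)
        have h' : (n : ℝ) = ((n / r : ℕ) : ℝ) * r := by exact_mod_cast this.symm
        rw [one_div_mul_one_div, mul_comm, ← h']
      rw [e1]
      have hrp : 0 < (Nat.totient r : ℝ) := by
        have := Nat.totient_pos.2 hr1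
        positivity
      have hle := sum_inv_factored r hr1 (F.image (fun n => n / r)) (by
        intro k hk
        rw [Finset.mem_image] at hk
        obtain ⟨n, hn, rfl⟩ := hk
        have hn1 : 1 ≤ n := (Finset.mem_Icc.1 (Finset.mem_filter.1 hn).1).1
        have hnr := (Finset.mem_filter.1 hn).2
        have hk0 : n / r ≠ 0 :=
          (Nat.div_pos (Nat.le_of_dvd hn1 (hdiv n hn)) hr1).ne'
        apply Nat.mem_factoredNumbers_of_primeFactors_subset hk0
        have hpf : r.primeFactors = n.primeFactors := by
          rw [← hnr]
          exact Nat.primeFactors_prod (fun p hp => Nat.prime_of_mem_primeFactors hp)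
        rw [hpf]
        exact Nat.primeFactors_mono (Nat.div_dvd_of_dvd (hdiv n hn)) (by omega))
      have hr' : (0 : ℝ) < r := by positivity
      calc _ ≤ (1 / (r : ℝ)) * (r / (Nat.totient r : ℝ)) := by gcongr
        _ = _ := by field_simp
    · rw [Finset.filter_false_of_mem]
      · simpa using selH_nonneg r
      · intro n _ h
        exact hex ⟨n, h⟩
  linarith

lemma wheel_bound (a k : ℕ) (ha : 3 ≤ a) :
    3 * (Finset.filter (fun n => n.Prime) (Finset.Ioc a (a + 2 * k))).card ≤ 2 * k + 2 := by
  have h : ∀ N, (Finset.filter (fun n => n % 6 = 1 ∨ n % 6 = 5) (Finset.Ioc a (a + N))).card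
      + ((a + 5) / 6 + (a + 1) / 6) = (a + N + 5) / 6 + (a + N + 1) / 6 := by
    intro N
    induction N with
    | zero => simp
    | succ N ih =>
      have e : Finset.Ioc a (a + (N + 1)) = insert (a + N + 1) (Finset.Ioc a (a + N)) := by
        ext n; simp only [Finset.mem_insert, Finset.mem_Ioc]; omega
      rw [e, Finset.filter_insert]
      split_ifs with hc
      · rw [Finset.card_insert_of_notMem (by simp)]
        omega
      · omega
  have h2 : (Finset.filter (fun n => n.Prime) (Finset.Ioc a (a + 2 * k))).card ≤
      (Finset.filter (fun n => n % 6 = 1 ∨ n % 6 = 5) (Finset.Ioc a (a + 2 * k))).card := by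
    apply Finset.card_le_card
    intro n hn
    simp only [Finset.mem_filter, Finset.mem_Ioc] at hn ⊢
    refine ⟨hn.1, ?_⟩
    have h2 : ¬ 2 ∣ n := fun h => by
      have := (Nat.prime_dvd_prime_iff_eq Nat.prime_two hn.2).1 h; omega
    have h3 : ¬ 3 ∣ n := fun h => by
      have := (Nat.prime_dvd_prime_iff_eq Nat.prime_three hn.2).1 h; omega
    omega
  have := h (2 * k)
  omega

noncomputable def gg (L : ℝ) : ℝ := 2 / (L - √L) + Real.exp (-√L)
noncomputable def HH (L : ℝ) : ℝ := 4 * Real.log (√L - 1) - 2 * (√L + 1) * Real.exp (-√L)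

lemma sqrt_facts {L : ℝ} (h : 9 ≤ L) : 3 ≤ √L ∧ √L * √L = L := by
  refine ⟨Real.le_sqrt_of_sq_le (by linarith), Real.mul_self_sqrt (by linarith)⟩

lemma gg_anti {a b : ℝ} (ha : 9 ≤ a) (hab : a ≤ b) : gg b ≤ gg a := by
  obtain ⟨h1, h2⟩ := sqrt_facts ha
  obtain ⟨h3, h4⟩ := sqrt_facts (ha.trans hab)
  have h5 : √a ≤ √b := Real.sqrt_le_sqrt hab
  unfold gg
  have : a - √a ≤ b - √b := by nlinarith
  have : 0 < a - √a := by nlinarith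
  gcongr

lemma HH_deriv {L : ℝ} (h : 9 ≤ L) : HasDerivAt HH (gg L) L := by
  obtain ⟨h1, h2⟩ := sqrt_facts h
  have hs : HasDerivAt (fun y => √y) (1 / (2 * √L)) L := Real.hasDerivAt_sqrt (by linarith)
  have d1 := ((hs.sub_const 1).log (by linarith : √L - 1 ≠ 0)).const_mul 4
  have d2 := ((hs.add_const 1).const_mul 2).mul (hs.neg.exp)
  refine (d1.sub d2).congr_deriv ?_
  unfold gg
  have e : L - √L = √L * (√L - 1) := by linarith
  have : √L - 1 ≠ 0 := by linarith
  have : √L ≠ 0 := by linarith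
  rw [e]
  simp only [Pi.neg_apply]
  field_simp
  ring

lemma HH_incr {a b : ℝ} (ha : 9 ≤ a) (hab : a ≤ b) : gg b * (b - a) ≤ HH b - HH a := by
  rcases hab.eq_or_lt with rfl | hlt
  · simp
  obtain ⟨c, hc, he⟩ := exists_hasDerivAt_eq_slope HH gg hlt
    (fun y hy => (HH_deriv (ha.trans hy.1)).continuousAt.continuousWithinAt)
    (fun y hy => HH_deriv (ha.trans hy.1.le))
  have := gg_anti (ha.trans hc.1.le) hc.2.le
  rw [eq_div_iff (by linarith)] at he
  rw [← he]
  have : 0 ≤ b - a := by linarith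
  gcongr

lemma gg_nonneg {a : ℝ} (ha : 9 ≤ a) : 0 ≤ gg a := by
  obtain ⟨h1, h2⟩ := sqrt_facts ha
  have : 0 < a - √a := by nlinarith
  unfold gg; positivity

lemma log_big {y : ℝ} (hy : 8192 ≤ y) : 9 ≤ Real.log y := by
  have h := Real.log_le_log (by norm_num) hy
  have e : Real.log 8192 = 13 * Real.log 2 := by
    rw [show (8192 : ℝ) = 2 ^ 13 by norm_num, Real.log_pow]; norm_num
  have := Real.log_two_gt_d9
  linarith

lemma sieve_bound (a k : ℕ) (hk : 4097 ≤ k) (hak : k ≤ a + 1) :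
    ((Finset.filter (fun n => n.Prime) (Finset.Ioc a (a + 2 * k))).card : ℝ)
      ≤ 2 * k * gg (Real.log (2 * k)) := by
  have hkR : (4097 : ℝ) ≤ k := by exact_mod_cast hk
  set L := Real.log (2 * k) with hL
  have hL9 : 9 ≤ L := log_big (by linarith)
  obtain ⟨h1, h2⟩ := sqrt_facts hL9
  have hpos : 0 < L - √L := by nlinarith
  set Y := Real.exp ((L - √L) / 2) with hY
  have hY2 : Y ^ 2 = 2 * k * Real.exp (-√L) := by
    rw [hY, ← Real.exp_nat_mul]
    have : ((2 : ℕ) : ℝ) * ((L - √L) / 2) = L + -√L := by push_cast; ring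
    rw [this, Real.exp_add, hL, Real.exp_log (by linarith)]
  have hY1 : 1 ≤ Y := Real.one_le_exp (by linarith)
  set Q := ⌊Y⌋₊ with hQ
  have hQ1 : 1 ≤ Q := (Nat.one_le_floor_iff Y).2 hY1
  have hQY : (Q : ℝ) ≤ Y := Nat.floor_le (by linarith)
  have hQY' : Y ≤ Q + 1 := (Nat.lt_floor_add_one Y).le
  have hG : (L - √L) / 2 ≤ selG Q := by
    refine le_trans ?_ (log_le_selG Q)
    rw [Real.le_log_iff_exp_le (by positivity)]
    exact hQY'
  have hexp : Real.exp (-√L) ≤ 1 / 2 := by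
    rw [Real.exp_neg, ← one_div]
    apply one_div_le_one_div_of_le (by norm_num)
    have := Real.add_one_le_exp (√L)
    linarith
  have hQk : Q < k := by
    have h3 : (Q : ℝ) ^ 2 ≤ k := by
      calc (Q : ℝ) ^ 2 ≤ Y ^ 2 := by gcongr
        _ = 2 * k * Real.exp (-√L) := hY2
        _ ≤ 2 * k * (1 / 2) := by gcongr
        _ = k := by ring
    have h4 : Q ^ 2 ≤ k := by exact_mod_cast h3
    by_contra hc
    push Not at hc
    nlinarith
  have hS := selberg_bound Q a (2 * k) hQ1
  have heq : Finset.filter (fun n => n.Prime) (Finset.Ioc a (a + 2 * k)) =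
      Finset.filter (fun n => n.Prime ∧ Q < n) (Finset.Ioc a (a + 2 * k)) := by
    apply Finset.filter_congr
    intro n hn
    rw [Finset.mem_Ioc] at hn
    constructor
    · intro h; exact ⟨h, by omega⟩
    · exact fun h => h.1
  rw [heq]
  refine hS.trans ?_
  unfold gg
  push_cast
  rw [mul_add, ← hY2]
  have : 2 * (k : ℝ) / selG Q ≤ 2 * k * (2 / (L - √L)) := by
    calc 2 * (k : ℝ) / selG Q ≤ 2 * k / ((L - √L) / 2) := by gcongr
      _ = _ := by field_simp
  have : (Q : ℝ) ^ 2 ≤ Y ^ 2 := by gcongr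
  linarith

lemma log_step {k : ℝ} (hk : 1 < k) : k / (k ^ 2 - 1 / 4) ≤ Real.log k - Real.log (k - 1) := by
  have h0 : 0 < k - 1 := by linarith
  have h := Real.hasSum_log_one_add_inv h0
  have h1 := sum_le_hasSum {0} (by intro i _; positivity) h
  have e : 1 + (k - 1)⁻¹ = k / (k - 1) := by field_simp; ring
  rw [e, Real.log_div (by linarith) (by linarith)] at h1
  refine le_trans ?_ h1
  simp only [Finset.sum_singleton]
  norm_num
  rw [div_le_iff₀ (by nlinarith)]
  have : 0 < 2 * (k - 1) + 1 := by linarith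
  field_simp
  nlinarith

theorem numeric (T A : ℕ → ℝ) (K : ℕ) (x : ℝ) (hK : 3 ≤ K) (hx1 : 2 * (K : ℝ) - 1 / 2 ≤ x)
    (hT1 : T 1 = 0)
    (hT : ∀ k, 1 ≤ k → k < K → T (k + 1) = T k + A k / ((k : ℝ) ^ 2 - 1 / 4))
    (hA : ∀ k, 1 ≤ k → k ≤ K → 3 * A k ≤ 2 * k + 2)
    (hA' : ∀ k, 4097 ≤ k → k ≤ K → A k ≤ 2 * k * gg (Real.log (2 * k))) :
    T K + A K / ((K : ℝ) - 1 / 2)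
      ≤ 2 * ((1284699552 : ℝ) / 444215525) + 4 * Real.log (Real.log x) := by
  have hC : (5.784 : ℝ) ≤ 2 * ((1284699552 : ℝ) / 444215525) := by norm_num
  have l2 := Real.log_two_gt_d9
  have l2' := Real.log_two_lt_d9
  have he := Real.exp_one_gt_d9
  have he' := Real.exp_one_lt_d9
  have hw : ∀ j, j + 2 ≤ K → T (j + 2) ≤
      (2 / 3) * (Real.log ((j : ℝ) + 1) + 10 / 3 - 1 / ((j : ℝ) + 3 / 2)) := by
    intro j
    induction j with
    | zero =>
      intro _
      have h1 := hT 1 le_rfl (by omega)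
      have h2 := hA 1 le_rfl (by omega)
      norm_num [hT1] at h1 h2 ⊢
      rw [h1]; linarith
    | succ j ih =>
      intro hj
      have h1 := hT (j + 2) (by omega) (by omega)
      have h2 := hA (j + 2) (by omega) (by omega)
      have h3 := ih (by omega)
      have h4 := log_step (k := (j : ℝ) + 2) (by have : (0 : ℝ) ≤ j := by positivity
                                                 linarith)
      push_cast at h1 h2 ⊢
      rw [show j + 1 + 2 = j + 2 + 1 by ring, h1]
      have e1 : (j : ℝ) + 2 - 1 = j + 1 := by ring
      have e2 : (j : ℝ) + 1 + 1 = j + 2 := by ring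
      rw [e1] at h4
      rw [e2]
      have hp : (0 : ℝ) < ((j : ℝ) + 2) ^ 2 - 1 / 4 := by
        have : (0 : ℝ) ≤ j := by positivity
        nlinarith
      have h5 : A (j + 2) / (((j : ℝ) + 2) ^ 2 - 1 / 4) ≤
          ((2 / 3) * ((j : ℝ) + 2 + 1)) / (((j : ℝ) + 2) ^ 2 - 1 / 4) := by
        gcongr; linarith
      have h6 : ((2 / 3) * ((j : ℝ) + 2 + 1)) / (((j : ℝ) + 2) ^ 2 - 1 / 4) =
          (2 / 3) * (((j : ℝ) + 2) / (((j : ℝ) + 2) ^ 2 - 1 / 4)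
            + (1 / ((j : ℝ) + 3 / 2) - 1 / ((j : ℝ) + 1 + 3 / 2))) := by
        have e3 : ((j : ℝ) + 2) ^ 2 - 1 / 4 = (j + 3 / 2) * (j + 1 + 3 / 2) := by ring
        rw [e3]
        field_simp
        ring
      linarith
  have hKR : (3 : ℝ) ≤ K := by exact_mod_cast hK
  have hwK : ∀ k, 2 ≤ k → k ≤ K → T k ≤ (2 / 3) * (Real.log ((k : ℝ) - 1) + 10 / 3) := by
    intro k hk hkK
    obtain ⟨j, rfl⟩ : ∃ j, k = j + 2 := ⟨k - 2, by omega⟩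
    have h := hw j hkK
    have : (0 : ℝ) ≤ 1 / ((j : ℝ) + 3 / 2) := by positivity
    have e : (((j + 2 : ℕ) : ℝ)) - 1 = j + 1 := by push_cast; ring
    rw [e]
    linarith
  have hlogx1 : 1 ≤ Real.log x := by
    rw [Real.le_log_iff_exp_le (by linarith)]; linarith
  rcases le_or_gt K 4097 with hc | hc
  · have h1 := hwK K (by omega) le_rfl
    have h2 : A K / ((K : ℝ) - 1 / 2) ≤ 16 / 15 := by
      rw [div_le_iff₀ (by linarith)]
      have := hA K (by omega) le_rfl
      linarith
    rcases le_or_gt K 32 with hd | hd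
    · have h3 : Real.log ((K : ℝ) - 1) ≤ 5 * Real.log 2 := by
        have : (K : ℝ) ≤ 32 := by exact_mod_cast hd
        have e : 5 * Real.log 2 = Real.log 32 := by
          rw [show (32 : ℝ) = 2 ^ 5 by norm_num, Real.log_pow]; norm_num
        rw [e]
        exact Real.log_le_log (by linarith) (by linarith)
      have h4 := Real.log_nonneg hlogx1
      linarith
    · have h3 : Real.log ((K : ℝ) - 1) ≤ 12 * Real.log 2 := by
        have : (K : ℝ) ≤ 4097 := by exact_mod_cast hc
        have e : 12 * Real.log 2 = Real.log 4096 := by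
          rw [show (4096 : ℝ) = 2 ^ 12 by norm_num, Real.log_pow]; norm_num
        rw [e]
        exact Real.log_le_log (by linarith) (by linarith)
      have hK33 : (33 : ℝ) ≤ K := by exact_mod_cast hd
      have h4 : 4 ≤ Real.log x := by
        rw [Real.le_log_iff_exp_le (by linarith)]
        have e : Real.exp 4 = Real.exp 1 ^ 4 := by rw [← Real.exp_nat_mul]; norm_num
        have : Real.exp 1 ^ 4 ≤ (2.72 : ℝ) ^ 4 := by gcongr; linarith
        norm_num at this
        linarith
      have h5 : 2 * Real.log 2 ≤ Real.log (Real.log x) := by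
        have e : 2 * Real.log 2 = Real.log 4 := by
          rw [show (4 : ℝ) = 2 ^ 2 by norm_num, Real.log_pow]; norm_num
        rw [e]
        exact Real.log_le_log (by norm_num) h4
      linarith
  · have hKb : (4098 : ℝ) ≤ K := by exact_mod_cast hc
    have h0 := hwK 4097 (by norm_num) (by omega)
    have e12 : Real.log 4096 = 12 * Real.log 2 := by
      rw [show (4096 : ℝ) = 2 ^ 12 by norm_num, Real.log_pow]; norm_num
    have h0' : T 4097 ≤ (2 / 3) * (12 * Real.log 2 + 10 / 3) := by
      rw [← e12]
      refine h0.trans (le_of_eq ?_)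
      norm_num
    have hs : ∀ j, 4097 + j ≤ K → T (4097 + j) ≤ T 4097 +
        2 * (HH (Real.log (8192 + 2 * j)) - HH (Real.log 8192)) := by
      intro j
      induction j with
      | zero => intro _; simp
      | succ j ih =>
        intro hj
        have h3 := ih (by omega)
        have h1 := hT (4097 + j) (by omega) (by omega)
        have h2 := hA' (4097 + j) (by omega) (by omega)
        have hj0 : (0 : ℝ) ≤ j := by positivity
        set k : ℝ := ((4097 + j : ℕ) : ℝ) with hk
        have hkj : k = 4097 + j := by rw [hk]; push_cast; ring
        have h4 := log_step (k := k) (by linarith)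
        have e1 : (8192 : ℝ) + 2 * ((j + 1 : ℕ) : ℝ) = 2 * k := by rw [hkj]; push_cast; ring
        have e2 : (8192 : ℝ) + 2 * (j : ℝ) = 2 * (k - 1) := by rw [hkj]; ring
        rw [e2] at h3
        rw [e1, show 4097 + (j + 1) = 4097 + j + 1 by ring, h1]
        have b1 : 9 ≤ Real.log (2 * (k - 1)) := log_big (by linarith)
        have b2 : Real.log (2 * (k - 1)) ≤ Real.log (2 * k) :=
          Real.log_le_log (by linarith) (by linarith)
        have h5 := HH_incr b1 b2
        have e3 : Real.log (2 * k) - Real.log (2 * (k - 1)) = Real.log k - Real.log (k - 1) := by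
          rw [Real.log_mul (by norm_num) (by linarith), Real.log_mul (by norm_num) (by linarith)]
          ring
        rw [e3] at h5
        have hg := gg_nonneg (b1.trans b2)
        have hp : 0 < k ^ 2 - 1 / 4 := by nlinarith
        have h6 : A (4097 + j) / (k ^ 2 - 1 / 4) ≤
            2 * (gg (Real.log (2 * k)) * (k / (k ^ 2 - 1 / 4))) := by
          calc _ ≤ (2 * k * gg (Real.log (2 * k))) / (k ^ 2 - 1 / 4) := by gcongr
            _ = _ := by ring
        have h7 : gg (Real.log (2 * k)) * (k / (k ^ 2 - 1 / 4)) ≤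
            gg (Real.log (2 * k)) * (Real.log k - Real.log (k - 1)) := by gcongr
        linarith
    have hfin := hs (K - 4097) (by omega)
    have ecast : ((K - 4097 : ℕ) : ℝ) = (K : ℝ) - 4097 := by
      rw [Nat.cast_sub (by omega)]; norm_num
    rw [ecast, show 4097 + (K - 4097) = K by omega] at hfin
    have exp3 : Real.exp (-3) ≤ 1 / 20 := by
      rw [Real.exp_neg, ← one_div]
      apply one_div_le_one_div_of_le (by norm_num)
      have e : Real.exp 3 = Real.exp 1 ^ 3 := by rw [← Real.exp_nat_mul]; norm_num
      have : (2.718 : ℝ) ^ 3 ≤ Real.exp 1 ^ 3 := by gcongr; linarith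
      norm_num at this
      linarith
    have s9 : √(9 : ℝ) = 3 := by
      rw [show (9 : ℝ) = 3 ^ 2 by norm_num]; exact Real.sqrt_sq (by norm_num)
    have hH9 : 4 * Real.log 2 - 2 / 5 ≤ HH (Real.log 8192) := by
      have b1 := log_big (le_refl 8192)
      have h5 := HH_incr (le_refl 9) b1
      have h6 := mul_nonneg (gg_nonneg b1) (sub_nonneg.2 b1)
      have e : HH 9 = 4 * Real.log 2 - 8 * Real.exp (-3) := by
        unfold HH; rw [s9]; norm_num
      linarith
    have hlast : 2 * HH (Real.log (8192 + 2 * ((K : ℝ) - 4097))) ≤ 4 * Real.log (Real.log x) := by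
      set L := Real.log (8192 + 2 * ((K : ℝ) - 4097)) with hL
      have b1 : 9 ≤ L := log_big (by linarith)
      have b2 : L ≤ Real.log x := Real.log_le_log (by linarith) (by linarith)
      obtain ⟨q1, q2⟩ := sqrt_facts b1
      have h5 : Real.log (√L - 1) ≤ Real.log (√L) := Real.log_le_log (by linarith) (by linarith)
      have h6 : Real.log (√L) = Real.log L / 2 := Real.log_sqrt (by linarith)
      have h7 : Real.log L ≤ Real.log (Real.log x) := Real.log_le_log (by linarith) b2
      have h8 : 0 ≤ 2 * (√L + 1) * Real.exp (-√L) := by positivity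
      unfold HH
      linarith
    have hbd : A K / ((K : ℝ) - 1 / 2) ≤ 1 := by
      have h5 := hA' K (by omega) le_rfl
      have h6 := gg_anti (le_refl 9) (log_big (y := 2 * (K : ℝ)) (by linarith))
      have h7 : gg 9 ≤ 2 / 5 := by
        unfold gg; rw [s9]; norm_num at exp3 ⊢; linarith
      rw [div_le_one (by linarith)]
      have : 2 * (K : ℝ) * gg (Real.log (2 * K)) ≤ 2 * K * (2 / 5) := by
        gcongr; linarith
      linarith
    linarith

lemma main_finite (m : ℕ) (x : ℝ) (hx : x = m + 1 / 2) (hm : 6 ≤ m) :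
    ∑ p ∈ Finset.Ioc (m - (m + 1) / 2) (m + (m + 1) / 2) with p.Prime, 1 / |x - p|
      ≤ 2 * ((1284699552 : ℝ) / 444215525) + 4 * Real.log (Real.log x) := by
  set K := (m + 1) / 2 with hK
  let P : ℕ → Finset ℕ := fun k => Finset.filter (fun p => p.Prime) (Finset.Ioc (m - k) (m + k))
  let A : ℕ → ℝ := fun k => ((P k).card : ℝ)
  let S : ℕ → ℝ := fun k => ∑ p ∈ P k, 1 / |x - p|
  have hstep : ∀ k, k < K → S (k + 1) = S k + (A (k + 1) - A k) * (1 / ((k : ℝ) + 1 / 2)) := by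
    intro k hk
    have hsub : P k ⊆ P (k + 1) := by
      intro p hp
      simp only [P, Finset.mem_filter, Finset.mem_Ioc] at hp ⊢
      exact ⟨by omega, hp.2⟩
    have h1 : S (k + 1) = ∑ p ∈ P (k + 1) \ P k, 1 / |x - p| + S k :=
      (Finset.sum_sdiff hsub).symm
    have h2 : ∑ p ∈ P (k + 1) \ P k, 1 / |x - p|
        = ∑ p ∈ P (k + 1) \ P k, 1 / ((k : ℝ) + 1 / 2) := by
      apply Finset.sum_congr rfl
      intro p hp
      simp only [P, Finset.mem_sdiff, Finset.mem_filter, Finset.mem_Ioc, not_and_or] at hp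
      obtain ⟨⟨h3, h4⟩, h5⟩ := hp
      have h6 : p + k = m ∨ p = m + k + 1 := by
        rcases h5 with h5 | h5
        · omega
        · exact absurd h4 h5
      congr 1
      rcases h6 with h6 | h6
      · have : (m : ℝ) = p + k := by exact_mod_cast h6.symm
        rw [hx, this, abs_of_nonneg]
        · ring
        · have : (0 : ℝ) ≤ k := by positivity
          linarith
      · have : (p : ℝ) = m + k + 1 := by exact_mod_cast h6
        rw [hx, this, abs_of_nonpos]
        · ring
        · have : (0 : ℝ) ≤ k := by positivity
          linarith
    have h3 : ((P (k + 1) \ P k).card : ℝ) = A (k + 1) - A k := by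
      rw [Finset.card_sdiff_of_subset hsub, Nat.cast_sub (Finset.card_le_card hsub)]
    rw [h1, h2, Finset.sum_const, nsmul_eq_mul, h3]
    ring
  have hS0 : S 0 = 0 := by simp [S, P]
  have hA0 : A 0 = 0 := by simp [A, P]
  let T : ℕ → ℝ := fun k => S k - A k / ((k : ℝ) - 1 / 2)
  have hKm : (2 * (K : ℝ)) ≤ m + 1 := by
    have : 2 * K ≤ m + 1 := by omega
    exact_mod_cast this
  have hPeq : ∀ k, k ≤ K →
      P k = Finset.filter (fun p => p.Prime) (Finset.Ioc (m - k) (m - k + 2 * k)) := by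
    intro k hk
    have : m - k + 2 * k = m + k := by omega
    simp only [P, this]
  have hfin := numeric T A K x (by omega) (by rw [hx]; linarith)
    (by
      have h := hstep 0 (by omega)
      simp only [T]
      rw [zero_add] at h
      rw [h, hS0, hA0]
      norm_num
      ring)
    (by
      intro k hk1 hk
      have h := hstep k hk
      simp only [T]
      rw [h]
      have hk' : (1 : ℝ) ≤ k := by exact_mod_cast hk1
      have e : (k : ℝ) ^ 2 - 1 / 4 = (k - 1 / 2) * (k + 1 / 2) := by ring
      have e1 : (k : ℝ) - 1 / 2 ≠ 0 := by linarith
      have e2 : (k : ℝ) + 1 / 2 ≠ 0 := by linarith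
      have e3 : (((k + 1 : ℕ) : ℝ)) - 1 / 2 = k + 1 / 2 := by push_cast; ring
      have e4 : A k / ((k - 1 / 2) * (k + 1 / 2)) =
          A k * (1 / ((k : ℝ) - 1 / 2) - 1 / ((k : ℝ) + 1 / 2)) := by
        rw [div_sub_div _ _ e1 e2]
        ring
      rw [e3, e, e4]
      ring)
    (by
      intro k hk1 hk
      have h := wheel_bound (m - k) k (by omega)
      rw [← hPeq k hk] at h
      simp only [A]
      exact_mod_cast h)
    (by
      intro k hk1 hk
      have h := sieve_bound (m - k) k hk1 (by omega)
      rw [← hPeq k hk] at h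
      exact h)
  have : T K + A K / ((K : ℝ) - 1 / 2) = S K := by simp only [T]; ring
  rw [this] at hfin
  exact hfin

/-- The estimate (3.6): `∑_{x/2 < p < 3x/2} 1/|x-p| ≤ 2C + 4 log log x`. -/
theorem prime_sum_bound (x : ℝ)
    (hx : ∃ m : ℕ, 0 < m ∧ x = m + 1 / 2) (hx' : 3.5 ≤ x) :
    (∑' p : ℕ, if p.Prime ∧ x / 2 < (p : ℝ) ∧ (p : ℝ) < 3 * x / 2 then
        1 / |x - p| else 0)
    ≤ 2 * ((1284699552 : ℝ) / 444215525) + 4 * Real.log (Real.log x) := by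
  obtain ⟨m, _, hxm⟩ := hx
  have hm3 : 3 ≤ m := by
    have : (3 : ℝ) ≤ m := by rw [hxm] at hx'; norm_num at hx'; linarith
    exact_mod_cast this
  have h1 : (∑' p : ℕ, if p.Prime ∧ x / 2 < (p : ℝ) ∧ (p : ℝ) < 3 * x / 2 then
        1 / |x - p| else 0) ≤
      ∑ p ∈ Finset.Ioc (m - (m + 1) / 2) (m + (m + 1) / 2) with p.Prime, 1 / |x - p| := by
    rw [tsum_eq_sum (s := Finset.Ioc (m - (m + 1) / 2) (m + (m + 1) / 2))]
    · rw [Finset.sum_filter]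
      apply Finset.sum_le_sum
      intro p _
      by_cases hp : p.Prime
      · simp only [hp, true_and, if_true]
        split_ifs
        · exact le_rfl
        · positivity
      · simp [hp]
    · intro p hp
      rw [if_neg]
      rintro ⟨_, ha, hb⟩
      apply hp
      rw [hxm] at ha hb
      have ha' : 2 * m + 1 < 4 * p := by
        have : 2 * (m : ℝ) + 1 < 4 * p := by linarith
        exact_mod_cast this
      have hb' : 4 * p < 6 * m + 3 := by
        have : 4 * (p : ℝ) < 6 * m + 3 := by linarith
        exact_mod_cast this
      rw [Finset.mem_Ioc]
      omega
  refine h1.trans ?_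
  rcases le_or_gt 6 m with h6 | h6
  · exact main_finite m x hxm h6
  · have hll : 0 ≤ Real.log (Real.log x) := by
      apply Real.log_nonneg
      rw [Real.le_log_iff_exp_le (by linarith)]
      have := Real.exp_one_lt_d9
      norm_num at hx'
      linarith
    have hC : (5 : ℝ) ≤ 2 * ((1284699552 : ℝ) / 444215525) := by norm_num
    suffices h : ∑ p ∈ Finset.Ioc (m - (m + 1) / 2) (m + (m + 1) / 2) with p.Prime, 1 / |x - p| ≤ 5 by
      linarith
    subst hxm
    have c : m = 3 ∨ m = 4 ∨ m = 5 := by omega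
    rcases c with rfl | rfl | rfl
    · rw [show Finset.filter (fun p => p.Prime) (Finset.Ioc (3 - (3 + 1) / 2) (3 + (3 + 1) / 2))
        = {2, 3, 5} by decide]
      norm_num [abs_of_pos, abs_of_neg]
    · rw [show Finset.filter (fun p => p.Prime) (Finset.Ioc (4 - (4 + 1) / 2) (4 + (4 + 1) / 2))
        = {3, 5} by decide]
      norm_num [abs_of_pos, abs_of_neg]
    · rw [show Finset.filter (fun p => p.Prime) (Finset.Ioc (5 - (5 + 1) / 2) (5 + (5 + 1) / 2))
        = {3, 5, 7} by decide]
      norm_num [abs_of_pos, abs_of_neg]
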